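/- (Monotonicity along the second flow) Let ρ > 0 and let h : V → ℝ change sign with max_{x∈V} h(x) > 0. If u : V × [0,T) → ℝ solves the second flow ∂_t u = α(t)h − R with ∫_V h e^{u(·,0)} dμ = 1, then for all 0 ≤ t₁ < t₂ < T one has J(u(·,t₂)) ≤ J(u(·,t₁)), where J(u) = (1/2)∫_V |∇u|² dμ + (ρ/|V|)∫_V u dμ. -/

import Mathlib

open Real Finset

variable {V : Type*}

/-- Discrete integral: `∫_V f dμ = Σ_x μ(x) f(x)`. -/
noncomputable def intV [Fintype V] (μ f : V → ℝ) : ℝ := ∑ x, μ x * f x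

/-- Volume `|V| = Σ_x μ(x)`. -/
noncomputable def volV [Fintype V] (μ : V → ℝ) : ℝ := ∑ x, μ x

/-- The nonlocal (fractional graph Laplacian type) operator
`Lu(x) = (1/μ(x)) Σ_{y ≠ x} W(x,y)(u(x) − u(y))`. -/
noncomputable def opL [Fintype V] [DecidableEq V] (μ : V → ℝ) (W : V → V → ℝ)
    (u : V → ℝ) (x : V) : ℝ :=
  (1 / μ x) * ∑ y ∈ univ.filter (fun y => y ≠ x), W x y * (u x - u y)

/-- Gradient form `∇u·∇v(x) = (1/(2μ(x))) Σ_{y ≠ x} W(x,y)(u(x)−u(y))(v(x)−v(y))`. -/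
noncomputable def gradForm [Fintype V] [DecidableEq V] (μ : V → ℝ) (W : V → V → ℝ)
    (u v : V → ℝ) (x : V) : ℝ :=
  (1 / (2 * μ x)) * ∑ y ∈ univ.filter (fun y => y ≠ x), W x y * (u x - u y) * (v x - v y)

/-- `|∇u|²(x) = ∇u·∇u(x)`. -/
noncomputable def gradSq [Fintype V] [DecidableEq V] (μ : V → ℝ) (W : V → V → ℝ)
    (u : V → ℝ) (x : V) : ℝ := gradForm μ W u u x


/-- The scalar curvature type function `R = (1/ρ) e^{−u} (Lu + ρ/|V|)`. -/
noncomputable def Rcurv [Fintype V] [DecidableEq V] (μ : V → ℝ) (W : V → V → ℝ)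
    (ρ : ℝ) (u : V → ℝ) (x : V) : ℝ :=
  (1 / ρ) * Real.exp (-(u x)) * (opL μ W u x + ρ / volV μ)

/-- The normalized coefficient `α = (∫_V h R e^u dμ) / (∫_V h² e^u dμ)`. -/
noncomputable def alphaC [Fintype V] [DecidableEq V] (μ : V → ℝ) (W : V → V → ℝ)
    (ρ : ℝ) (h : V → ℝ) (u : V → ℝ) : ℝ :=
  intV μ (fun x => h x * Rcurv μ W ρ u x * Real.exp (u x)) /
    intV μ (fun x => (h x) ^ 2 * Real.exp (u x))

/-- The reduced energy `J(u) = (1/2)∫_V |∇u|² dμ + (ρ/|V|)∫_V u dμ`. -/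
noncomputable def Jred [Fintype V] [DecidableEq V] (μ : V → ℝ) (W : V → V → ℝ)
    (ρ : ℝ) (u : V → ℝ) : ℝ :=
  (1 / 2) * intV μ (gradSq μ W u) + (ρ / volV μ) * intV μ u

/-!
Write `v = α h − R` for the velocity of the flow. The gradient of `J` with respect to `μ` is
`Lu + ρ/|V| = ρ R e^u`, and `α` is chosen exactly so that `v` is orthogonal to `h` in
`L²(e^u μ)`. Hence `dJ/dt = ρ ∫ R v e^u dμ = −ρ ∫ v² e^u dμ ≤ 0`.
-/

section Integral

variable [Fintype V] {μ : V → ℝ}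

lemma intV_add (f g : V → ℝ) : intV μ (fun x ↦ f x + g x) = intV μ f + intV μ g :=
  dotProduct_add μ f g

lemma intV_sub (f g : V → ℝ) : intV μ (fun x ↦ f x - g x) = intV μ f - intV μ g :=
  dotProduct_sub μ f g

lemma intV_const_mul (c : ℝ) (f : V → ℝ) : intV μ (fun x ↦ c * f x) = c * intV μ f :=
  dotProduct_smul c μ f

lemma intV_nonneg {f : V → ℝ} (hμ : ∀ x, 0 ≤ μ x) (hf : ∀ x, 0 ≤ f x) : 0 ≤ intV μ f :=
  sum_nonneg fun x _ ↦ mul_nonneg (hμ x) (hf x)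

lemma intV_pos {f : V → ℝ} (hμ : ∀ x, 0 < μ x) (hf : ∀ x, 0 ≤ f x) (hf' : ∃ x, 0 < f x) :
    0 < intV μ f := by
  obtain ⟨x, hx⟩ := hf'
  exact sum_pos' (fun y _ ↦ mul_nonneg (hμ y).le (hf y)) ⟨x, mem_univ x, mul_pos (hμ x) hx⟩

lemma hasDerivWithinAt_intV {f : ℝ → V → ℝ} {f' : V → ℝ} {I : Set ℝ} {t : ℝ}
    (hf : ∀ x, HasDerivWithinAt (fun s ↦ f s x) (f' x) I t) :
    HasDerivWithinAt (fun s ↦ intV μ (f s)) (intV μ f') I t :=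
  HasDerivWithinAt.fun_sum fun x _ ↦ (hf x).const_mul (μ x)

end Integral

section Green

lemma sum_sum_mul_sub_of_antisymm {R : Type*} [CommRing R] [Fintype V] {F : V → V → R}
    (hF : ∀ x y, F y x = -F x y) (v : V → R) :
    ∑ x, ∑ y, F x y * (v x - v y) = 2 * ∑ x, (∑ y, F x y) * v x := by
  have swap : ∑ x, ∑ y, F x y * v y = -∑ x, ∑ y, F x y * v x := by
    simp only [← sum_neg_distrib, ← neg_mul, ← hF]
    exact sum_comm
  simp only [mul_sub, sum_sub_distrib, swap, sum_mul]
  ring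

variable [Fintype V] [DecidableEq V] {μ : V → ℝ} {W : V → V → ℝ}

lemma mul_opL {x : V} (hx : μ x ≠ 0) (u : V → ℝ) :
    μ x * opL μ W u x = ∑ y, W x y * (u x - u y) := by
  have off_diag : ∀ y ∈ univ, W x y * (u x - u y) ≠ 0 → y ≠ x := by
    rintro y - hy rfl
    simp only [sub_self, mul_zero, ne_eq, not_true_eq_false] at hy
  rw [opL, sum_filter_of_ne off_diag, ← mul_assoc, mul_one_div_cancel hx, one_mul]

lemma mul_gradForm {x : V} (hx : μ x ≠ 0) (u v : V → ℝ) :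
    μ x * gradForm μ W u v x = 1 / 2 * ∑ y, W x y * (u x - u y) * (v x - v y) := by
  have off_diag : ∀ y ∈ univ, W x y * (u x - u y) * (v x - v y) ≠ 0 → y ≠ x := by
    rintro y - hy rfl
    simp only [sub_self, mul_zero, ne_eq, not_true_eq_false] at hy
  rw [gradForm, sum_filter_of_ne off_diag]
  field_simp

theorem intV_gradForm (hμ : ∀ x, μ x ≠ 0) (hW : ∀ x y, W x y = W y x) (u v : V → ℝ) :
    intV μ (gradForm μ W u v) = intV μ (fun x ↦ opL μ W u x * v x) := by
  have antisymm : ∀ x y, W y x * (u y - u x) = -(W x y * (u x - u y)) := fun x y ↦ by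
    rw [hW y x]; ring
  calc intV μ (gradForm μ W u v)
      = 1 / 2 * ∑ x, ∑ y, W x y * (u x - u y) * (v x - v y) := by
        simp only [intV, mul_gradForm (hμ _), mul_sum]
    _ = ∑ x, (∑ y, W x y * (u x - u y)) * v x := by
        rw [sum_sum_mul_sub_of_antisymm antisymm]; ring
    _ = intV μ (fun x ↦ opL μ W u x * v x) := by
        simp only [intV, ← mul_opL (hμ _), mul_assoc]

end Green

section FirstVariation

variable [Fintype V] [DecidableEq V] {μ : V → ℝ} {W : V → V → ℝ}
  {u : ℝ → V → ℝ} {v : V → ℝ} {I : Set ℝ} {t : ℝ}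

lemma hasDerivWithinAt_gradSq (hu : HasDerivWithinAt u v I t) (x : V) :
    HasDerivWithinAt (fun s ↦ gradSq μ W (u s) x) (2 * gradForm μ W (u t) v x) I t := by
  have diff (y : V) : HasDerivWithinAt (fun s ↦ u s x - u s y) (v x - v y) I t :=
    (hasDerivWithinAt_pi.1 hu x).sub (hasDerivWithinAt_pi.1 hu y)
  refine ((HasDerivWithinAt.fun_sum fun y _ ↦
    ((diff y).const_mul (W x y)).mul (diff y)).const_mul (1 / (2 * μ x))).congr_deriv ?_
  rw [gradForm, mul_left_comm 2, mul_sum _ _ 2]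
  congr! 2 with y
  ring

theorem hasDerivWithinAt_Jred (hμ : ∀ x, μ x ≠ 0) (hW : ∀ x y, W x y = W y x) (ρ : ℝ)
    (hu : HasDerivWithinAt u v I t) :
    HasDerivWithinAt (fun s ↦ Jred μ W ρ (u s))
      (intV μ (fun x ↦ (opL μ W (u t) x + ρ / volV μ) * v x)) I t := by
  refine (((hasDerivWithinAt_intV (hasDerivWithinAt_gradSq hu)).const_mul (1 / 2)).add
    ((hasDerivWithinAt_intV (hasDerivWithinAt_pi.1 hu)).const_mul (ρ / volV μ))).congr_deriv ?_
  simp only [add_mul, intV_add, intV_const_mul, intV_gradForm hμ hW]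
  ring

end FirstVariation

section SecondFlow

variable [Fintype V] [DecidableEq V] {μ : V → ℝ} {W : V → V → ℝ} {ρ : ℝ} {h : V → ℝ}

/-- The right-hand side `α h − R` of the second flow, as a vector field on functions `u`. -/
noncomputable def flowVelocity (μ : V → ℝ) (W : V → V → ℝ) (ρ : ℝ) (h u : V → ℝ) (x : V) : ℝ :=
  alphaC μ W ρ h u * h x - Rcurv μ W ρ u x

lemma opL_add_eq_Rcurv_mul_exp (hρ : ρ ≠ 0) (u : V → ℝ) (x : V) :
    opL μ W u x + ρ / volV μ = ρ * Rcurv μ W ρ u x * exp (u x) := by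
  rw [Rcurv, exp_neg]
  field_simp

lemma alphaC_mul_intV (hμ : ∀ x, 0 < μ x) (hh : h ≠ 0) (u : V → ℝ) :
    alphaC μ W ρ h u * intV μ (fun x ↦ h x ^ 2 * exp (u x)) =
      intV μ (fun x ↦ h x * Rcurv μ W ρ u x * exp (u x)) := by
  obtain ⟨x, hx : h x ≠ 0⟩ := Function.ne_iff.1 hh
  have weighted_sq_pos : 0 < intV μ (fun x ↦ h x ^ 2 * exp (u x)) :=
    intV_pos hμ (fun _ ↦ by positivity) ⟨x, by positivity⟩
  exact div_mul_cancel₀ _ weighted_sq_pos.ne'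

lemma intV_mul_flowVelocity_mul_exp (hμ : ∀ x, 0 < μ x) (hh : h ≠ 0) (u : V → ℝ) :
    intV μ (fun x ↦ h x * flowVelocity μ W ρ h u x * exp (u x)) = 0 := by
  set α := alphaC μ W ρ h u with hα
  calc intV μ (fun x ↦ h x * flowVelocity μ W ρ h u x * exp (u x))
      = intV μ (fun x ↦ α * (h x ^ 2 * exp (u x)) - h x * Rcurv μ W ρ u x * exp (u x)) := by
        congr! 2 with x
        rw [flowVelocity, ← hα]
        ring
    _ = 0 := by
        rw [intV_sub, intV_const_mul, hα, alphaC_mul_intV hμ hh, sub_self]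

theorem intV_opL_add_mul_flowVelocity (hμ : ∀ x, 0 < μ x) (hρ : ρ ≠ 0) (hh : h ≠ 0)
    (u : V → ℝ) :
    intV μ (fun x ↦ (opL μ W u x + ρ / volV μ) * flowVelocity μ W ρ h u x) =
      -(ρ * intV μ (fun x ↦ flowVelocity μ W ρ h u x ^ 2 * exp (u x))) := by
  set v := flowVelocity μ W ρ h u with hv
  set α := alphaC μ W ρ h u with hα
  have Rcurv_eq (x : V) : Rcurv μ W ρ u x = α * h x - v x := by
    rw [hv, hα, flowVelocity, sub_sub_cancel]
  calc intV μ (fun x ↦ (opL μ W u x + ρ / volV μ) * v x)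
      = intV μ (fun x ↦ ρ * (α * (h x * v x * exp (u x)) - v x ^ 2 * exp (u x))) := by
        congr! 2 with x
        rw [opL_add_eq_Rcurv_mul_exp hρ, Rcurv_eq]
        ring
    _ = -(ρ * intV μ (fun x ↦ v x ^ 2 * exp (u x))) := by
        rw [intV_const_mul, intV_sub, intV_const_mul, hv,
          intV_mul_flowVelocity_mul_exp hμ hh, mul_zero, zero_sub, mul_neg]

theorem second_flow_monotone_general (hμ : ∀ x, 0 < μ x) (hW : ∀ x y, W x y = W y x)
    (hρ : 0 < ρ) (hh : h ≠ 0) {I : Set ℝ} (hI : Convex ℝ I) {u : ℝ → V → ℝ}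
    (hflow : ∀ t ∈ I, HasDerivWithinAt u (flowVelocity μ W ρ h (u t)) I t) :
    AntitoneOn (fun t ↦ Jred μ W ρ (u t)) I := by
  have dissipation : ∀ t ∈ I, HasDerivWithinAt (fun s ↦ Jred μ W ρ (u s))
      (-(ρ * intV μ (fun x ↦ flowVelocity μ W ρ h (u t) x ^ 2 * exp (u t x)))) I t := by
    intro t ht
    rw [← intV_opL_add_mul_flowVelocity hμ hρ.ne' hh]
    exact hasDerivWithinAt_Jred (fun x ↦ (hμ x).ne') hW ρ (hflow t ht)
  refine antitoneOn_of_hasDerivWithinAt_nonpos hI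
    (fun t ht ↦ (dissipation t ht).continuousWithinAt)
    (fun t ht ↦ (dissipation t (interior_subset ht)).mono interior_subset) fun t _ ↦ ?_
  exact neg_nonpos.2 <| mul_nonneg hρ.le <|
    intV_nonneg (fun x ↦ (hμ x).le) fun _ ↦ by positivity

end SecondFlow

/-- (Monotonicity along the second flow) `J(u(·,t))` is non-increasing along the second flow. -/
theorem second_flow_monotone [Fintype V] [Nonempty V] [DecidableEq V]
    (μ : V → ℝ) (W : V → V → ℝ)
    (hμ : ∀ x, 0 < μ x)
    (hWsym : ∀ x y, W x y = W y x)
    (hWpos : ∀ x y, x ≠ y → 0 < W x y)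
    (ρ : ℝ) (hρ : 0 < ρ)
    (h : V → ℝ) (hpos : ∃ x, 0 < h x) (hneg : ∃ x, h x < 0)
    (T : ℝ) (u : ℝ → V → ℝ)
    (hinit : intV μ (fun x => h x * Real.exp (u 0 x)) = 1)
    (hflow : ∀ x, ∀ t ∈ Set.Ico (0 : ℝ) T,
      HasDerivAt (fun s => u s x)
        (alphaC μ W ρ h (u t) * h x - Rcurv μ W ρ (u t) x) t) :
    ∀ t₁ t₂ : ℝ, 0 ≤ t₁ → t₁ < t₂ → t₂ < T →
      Jred μ W ρ (u t₂) ≤ Jred μ W ρ (u t₁) := by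
  intro t₁ t₂ ht₁ ht₁₂ ht₂
  obtain ⟨x, hx⟩ := hpos
  exact second_flow_monotone_general hμ hWsym hρ (Function.ne_iff.2 ⟨x, hx.ne'⟩)
    (convex_Ico 0 T) (fun t ht ↦ hasDerivWithinAt_pi.2 fun x ↦ (hflow x t ht).hasDerivWithinAt)
    ⟨ht₁, ht₁₂.trans ht₂⟩ ⟨ht₁.trans ht₁₂.le, ht₂⟩ ht₁₂.le
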